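/- arXiv:math/0305087 — 2 statements merged into one kernel-verified Lean document; each statement's English description precedes it below -/
import Mathlib

section
/- Let f : ℤ → ℕ ∪ {∞} be any function such that Δ = card(f⁻¹(0)) is finite, and let c = 8 + ⌊(Δ + 1)/2⌋. Then the collection of sets A of integers satisfying both r_{A,2}(n) = f(n) for all integers n and the lower bound that the number of elements a ∈ A with |a| ≤ x is at least (x/c)^{1/3} for all real x ≥ 8c, is uncountable. -/
/-- The representation function of order 2: the number (in `ℕ∞`) of ways to
write `n = a₁ + a₂` with `a₁, a₂ ∈ A` and `a₁ ≤ a₂`. -/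
noncomputable def rep2 (A : Set ℤ) (n : ℤ) : ℕ∞ :=
  {p : ℤ × ℤ | p.1 ∈ A ∧ p.2 ∈ A ∧ p.1 ≤ p.2 ∧ p.1 + p.2 = n}.encard

/-!
Build `A` as an increasing union of finite sets, adding at step `k` a pair `x, y` whose sum is a
prescribed deficient integer `u`, one with fewer representations than `f u`. If `x` avoids a set of
`O(k³)` integers, then every other new sum is new, hit only once and not a zero of `f`, so no
count exceeds `f`. So few exclusions leave room for `x` and `y` of size `O(k³)`, which gives the
cube root lower bound. Serving every integer infinitely often makes the counts reach `f`. To miss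
the `k`-th set `B` of a given list, offer a fresh `x`: if `x ∉ B` put it into `A`, otherwise forbid
it forever.
-/

open Filter Finset
open scoped Pointwise

section Representation

variable {A : Set ℤ} {n : ℤ}

theorem rep2_mono {B : Set ℤ} (h : A ⊆ B) (n : ℤ) : rep2 A n ≤ rep2 B n :=
  Set.encard_le_encard fun _ hp ↦ ⟨h hp.1, h hp.2.1, hp.2.2⟩

theorem rep2_eq_zero_iff : rep2 A n = 0 ↔ n ∉ A + A := by
  rw [rep2, Set.encard_eq_zero, Set.eq_empty_iff_forall_notMem, Set.mem_add]
  refine ⟨?_, fun h p hp ↦ h ⟨p.1, hp.1, p.2, hp.2.1, hp.2.2.2⟩⟩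
  rintro h ⟨a, ha, b, hb, hab⟩
  rcases le_total a b with hle | hle
  · exact h (a, b) ⟨ha, hb, hle, hab⟩
  · exact h (b, a) ⟨hb, ha, hle, by rwa [add_comm]⟩

theorem rep2_insert {x : ℤ} (hx : x ∉ A) (n : ℤ) :
    rep2 (insert x A) n = rep2 A n + (insert x A).indicator 1 (n - x) := by
  by_cases h : n - x ∈ insert x A
  · have hnew : (min x (n - x), max x (n - x)) ∉
        {p : ℤ × ℤ | p.1 ∈ A ∧ p.2 ∈ A ∧ p.1 ≤ p.2 ∧ p.1 + p.2 = n} := by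
      grind
    rw [Set.indicator_of_mem h, Pi.one_apply, rep2, rep2, ← Set.encard_insert_of_notMem hnew]
    congr 1
    ext ⟨p, q⟩
    simp only [Set.mem_insert_iff, Set.mem_ofPred_eq, Prod.mk.injEq] at h ⊢
    grind
  · rw [Set.indicator_of_notMem h, add_zero, rep2, rep2]
    congr 1
    ext ⟨p, q⟩
    grind

theorem encard_iUnion_le_of_directed {α ι : Type*} [Nonempty ι] {s : ι → Set α}
    (hs : Directed (· ⊆ ·) s) {m : ℕ∞} (h : ∀ i, (s i).encard ≤ m) :
    (⋃ i, s i).encard ≤ m := by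
  by_contra! hlt
  obtain ⟨t, ht, htcard⟩ := Set.exists_subset_encard_eq (Order.add_one_le_of_lt hlt)
  have hm : m ≠ ⊤ := hlt.ne_top
  have htfin : t.Finite := Set.encard_ne_top_iff.1 (by simpa [htcard] using hm)
  obtain ⟨i, hi⟩ := hs.exists_mem_subset_of_finset_subset_biUnion (s := htfin.toFinset)
    (by simpa using ht)
  have hle : m + 1 ≤ m := htcard ▸ (Set.encard_le_encard (by simpa using hi)).trans (h i)
  exact ((ENat.add_one_le_iff hm).1 hle).false

theorem rep2_iUnion_le {ι : Type*} [Nonempty ι] {S : ι → Set ℤ} (hS : Directed (· ⊆ ·) S)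
    {m : ℕ∞} (h : ∀ i, rep2 (S i) n ≤ m) : rep2 (⋃ i, S i) n ≤ m := by
  let pairs (B : Set ℤ) : Set (ℤ × ℤ) := {p | p.1 ∈ B ∧ p.2 ∈ B ∧ p.1 ≤ p.2 ∧ p.1 + p.2 = n}
  have hpairs : Monotone pairs := fun B C h p hp ↦ ⟨h hp.1, h hp.2.1, hp.2.2⟩
  have hsub : pairs (⋃ i, S i) ⊆ ⋃ i, pairs (S i) := by
    rintro p ⟨h₁, h₂, h₁₂⟩
    obtain ⟨i, hi⟩ := Set.mem_iUnion.1 h₁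
    obtain ⟨j, hj⟩ := Set.mem_iUnion.1 h₂
    obtain ⟨k, hik, hjk⟩ := hS i j
    exact Set.mem_iUnion.2 ⟨k, hik hi, hjk hj, h₁₂⟩
  exact (Set.encard_le_encard hsub).trans
    (encard_iUnion_le_of_directed (hS.mono_comp _ hpairs) h)

theorem rep2_iUnion_eq {f : ℤ → ℕ∞} {S : ℕ → Set ℤ} (hS : Monotone S) {v : ℕ → ℤ}
    (hv : ∀ n, ∃ᶠ k in atTop, v k = n) (hle : ∀ k n, rep2 (S k) n ≤ f n)
    (hgrow : ∀ k, rep2 (S k) (v k) < f (v k) → rep2 (S k) (v k) + 1 ≤ rep2 (S (k + 1)) (v k))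
    (n : ℤ) : rep2 (⋃ k, S k) n = f n := by
  refine (rep2_iUnion_le hS.directed_le fun k ↦ hle k n).antisymm (not_lt.1 fun hlt ↦ ?_)
  have hsub (k : ℕ) : rep2 (S k) n ≤ rep2 (⋃ k, S k) n := rep2_mono (Set.subset_iUnion S k) n
  have hunbounded (j : ℕ) : ∃ k, (j : ℕ∞) ≤ rep2 (S k) n := by
    induction j with
    | zero => exact ⟨0, by simp⟩
    | succ j ih =>
      obtain ⟨k, hk⟩ := ih
      obtain ⟨l, hkl, rfl⟩ := frequently_atTop.1 (hv n) k
      refine ⟨l + 1, le_trans ?_ (hgrow l ((hsub l).trans_lt hlt))⟩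
      push_cast
      gcongr
      exact hk.trans (rep2_mono (hS hkl) _)
  have htop : rep2 (⋃ k, S k) n = ⊤ := ENat.eq_top_iff_forall_ge.2 fun j ↦
    (hunbounded j).elim fun k hk ↦ hk.trans (hsub k)
  exact not_top_lt (htop ▸ hlt)

end Representation

section FreshPair

/-- The pair `x, y` is fresh for `A` relative to a set `T` of integers: no sum of `x` with an
element of `A ∪ {x}` and no sum of `y` with an element of `A ∪ {y}` lies in `T`, and the sums of the
two kinds are different. Adjoining such a pair to `A` creates only one new representation of
elements of `T`, that of `x + y`. -/
structure IsFreshPair (A T : Set ℤ) (x y : ℤ) : Prop where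
  add_left_notMem : ∀ a ∈ insert x A, a + x ∉ T
  add_right_notMem : ∀ b ∈ insert y A, b + y ∉ T
  add_ne_add : ∀ a ∈ insert x A, ∀ b ∈ insert y A, a + x ≠ b + y

namespace IsFreshPair

variable {A T : Set ℤ} {x y n : ℤ}

theorem ne (h : IsFreshPair A T x y) : x ≠ y := fun hxy ↦
  h.add_ne_add x (Set.mem_insert x A) y (Set.mem_insert y A) (by rw [hxy])

theorem right_notMem (h : IsFreshPair A T x y) (hT : x + y ∈ T) : y ∉ A := fun hy ↦
  h.add_left_notMem y (Set.mem_insert_of_mem x hy) (add_comm x y ▸ hT)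

theorem left_notMem_insert (h : IsFreshPair A T x y) (hT : x + y ∈ T) : x ∉ insert y A := by
  rintro (hxy | hx)
  · exact h.ne hxy
  · exact h.add_right_notMem x (Set.mem_insert_of_mem y hx) hT

theorem rep2_insert_insert (h : IsFreshPair A T x y) (hT : x + y ∈ T) (n : ℤ) :
    rep2 (insert x (insert y A)) n = rep2 A n + (insert y A).indicator 1 (n - y) +
      (insert x (insert y A)).indicator 1 (n - x) := by
  rw [rep2_insert (h.left_notMem_insert hT), rep2_insert (h.right_notMem hT)]

theorem rep2_insert_insert_of_mem (h : IsFreshPair A T x y) (hT : x + y ∈ T) (hn : n ∈ T) :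
    rep2 (insert x (insert y A)) n = rep2 A n + ({x + y} : Set ℤ).indicator 1 n := by
  have hright : n - y ∉ insert y A := fun hmem ↦
    h.add_right_notMem _ hmem (by rwa [sub_add_cancel])
  have hleft : n - x ∈ insert x (insert y A) ↔ n ∈ ({x + y} : Set ℤ) := by
    have : n - x ∉ insert x A := fun hmem ↦ h.add_left_notMem _ hmem (by rwa [sub_add_cancel])
    grind
  rw [h.rep2_insert_insert hT, Set.indicator_of_notMem hright, add_zero]
  congr 1
  simp only [Set.indicator, hleft, Pi.one_apply]

theorem rep2_insert_insert_le_one (h : IsFreshPair A T x y) (hT : x + y ∈ T)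
    (hAT : A + A ⊆ T) (hn : n ∉ T) : rep2 (insert x (insert y A)) n ≤ 1 := by
  have hzero : rep2 A n = 0 := rep2_eq_zero_iff.2 fun hmem ↦ hn (hAT hmem)
  have hnot : ¬ (n - y ∈ insert y A ∧ n - x ∈ insert x (insert y A)) := by
    rintro ⟨hy, hx | hx | hx⟩
    · exact h.add_ne_add x (by simp) _ hy (by omega)
    · exact hn (by rwa [show n = x + y by omega])
    · exact h.add_ne_add _ (Set.mem_insert_of_mem x hx) _ hy (by omega)
  rw [h.rep2_insert_insert hT, hzero, zero_add]
  by_cases hy : n - y ∈ insert y A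
  · rw [Set.indicator_of_notMem fun hx ↦ hnot ⟨hy, hx⟩, add_zero]
    exact Set.indicator_le_self' (fun _ _ ↦ zero_le) _
  · rw [Set.indicator_of_notMem hy, zero_add]
    exact Set.indicator_le_self' (fun _ _ ↦ zero_le) _

theorem rep2_insert_insert_le {f : ℤ → ℕ∞} (h : IsFreshPair A T x y) (hT : x + y ∈ T)
    (hAT : A + A ⊆ T) (hfT : ∀ n, f n = 0 → n ∈ T) (hf : ∀ n, rep2 A n ≤ f n)
    (hlt : rep2 A (x + y) < f (x + y)) (n : ℤ) : rep2 (insert x (insert y A)) n ≤ f n := by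
  by_cases hn : n ∈ T
  · rw [h.rep2_insert_insert_of_mem hT hn]
    by_cases hxy : n = x + y
    · subst hxy
      simpa using Order.add_one_le_of_lt hlt
    · simpa [hxy] using hf n
  · exact (h.rep2_insert_insert_le_one hT hAT hn).trans
      (Order.one_le_iff_ne_zero.2 fun h0 ↦ hn (hfT n h0))

end IsFreshPair

theorem exists_abs_le_notMem {S : Finset ℤ} {M : ℕ} (hS : #S ≤ 2 * M) :
    ∃ x : ℤ, |x| ≤ M ∧ x ∉ S := by
  have hcard : #S < #(Icc (-(M : ℤ)) M) := by
    rw [Int.card_Icc]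
    omega
  obtain ⟨x, hx, hxS⟩ := exists_mem_notMem_of_card_lt_card hcard
  exact ⟨x, abs_le.2 (mem_Icc.1 hx), hxS⟩

theorem exists_card_le_forall_add_notMem (A T : Finset ℤ) :
    ∃ W : Finset ℤ, #W ≤ #T * (#A + 1) ∧ ∀ x ∉ W, ∀ a ∈ insert x A, a + x ∉ T := by
  refine ⟨(T - A) ∪ T.image (· / 2), ?_, fun x hx a ha hT ↦ hx ?_⟩
  · calc #((T - A) ∪ T.image (· / 2)) ≤ #(T - A) + #(T.image (· / 2)) := card_union_le _ _
      _ ≤ #T * #A + #T := Nat.add_le_add card_sub_le card_image_le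
      _ = #T * (#A + 1) := by ring
  · rcases mem_insert.1 ha with rfl | ha
    · exact mem_union_right _ (mem_image.2 ⟨a + a, hT, by omega⟩)
    · exact mem_union_left _ (mem_sub.2 ⟨a + x, hT, a, ha, by ring⟩)

theorem exists_card_le_forall_add_ne_add (A : Finset ℤ) (u : ℤ) :
    ∃ W : Finset ℤ, #W ≤ (#A + 1) ^ 2 ∧
      ∀ x ∉ W, ∀ a ∈ insert x A, ∀ b ∈ insert (u - x) A, a + x ≠ b + (u - x) := by
  let W₁ : Finset ℤ := image₂ (fun a b ↦ (u + b - a) / 2) A A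
  let W₂ : Finset ℤ := A.image fun a ↦ (2 * u - a) / 3
  let W₃ : Finset ℤ := A.image fun b ↦ (u + b) / 3
  have hW₁ : #W₁ ≤ #A * #A := card_image₂_le _ A A
  have hW₂ : #W₂ ≤ #A := card_image_le
  have hW₃ : #W₃ ≤ #A := card_image_le
  refine ⟨insert (u / 2) (W₁ ∪ (W₂ ∪ W₃)), ?_, fun x hx a ha b hb hab ↦ hx ?_⟩
  · calc #(insert (u / 2) (W₁ ∪ (W₂ ∪ W₃))) ≤ #W₁ + (#W₂ + #W₃) + 1 := by
          refine (card_insert_le _ _).trans ?_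
          grw [card_union_le, card_union_le]
      _ ≤ #A * #A + (#A + #A) + 1 := by gcongr
      _ = (#A + 1) ^ 2 := by ring
  · simp only [mem_insert, mem_union]
    rcases mem_insert.1 ha with rfl | ha <;> rcases mem_insert.1 hb with rfl | hb
    · exact .inl (by omega)
    · exact .inr (.inr (.inr (mem_image.2 ⟨b, hb, by omega⟩)))
    · exact .inr (.inr (.inl (mem_image.2 ⟨a, ha, by omega⟩)))
    · exact .inr (.inl (mem_image₂.2 ⟨a, ha, b, hb, by omega⟩))

theorem exists_isFreshPair (A T F : Finset ℤ) (u : ℤ) {M : ℕ}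
    (hM : 2 * (#T * (#A + 1) + #F) + (#A + 1) ^ 2 ≤ 2 * M) :
    ∃ x y : ℤ, x + y = u ∧ |x| ≤ M ∧ x ∉ F ∧ y ∉ F ∧ IsFreshPair A T x y := by
  obtain ⟨V, hVcard, hV⟩ := exists_card_le_forall_add_notMem A T
  obtain ⟨W, hWcard, hW⟩ := exists_card_le_forall_add_ne_add A u
  have hcard : #((V ∪ F) ∪ (V ∪ F).image (u - ·) ∪ W) ≤ 2 * M := by
    grw [card_union_le, card_union_le, card_image_le, card_union_le]
    omega
  obtain ⟨x, hxM, hx⟩ := exists_abs_le_notMem hcard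
  simp only [mem_union, not_or] at hx
  obtain ⟨⟨⟨hxV, hxF⟩, hreflect⟩, hxW⟩ := hx
  have hy : u - x ∉ V ∪ F := fun h ↦ hreflect (mem_image.2 ⟨u - x, h, sub_sub_cancel u x⟩)
  rw [mem_union, not_or] at hy
  exact ⟨x, u - x, add_sub_cancel x u, hxM, hxF, hy.2,
    ⟨by exact_mod_cast hV x hxV, by exact_mod_cast hV (u - x) hy.1, by exact_mod_cast hW x hxW⟩⟩

end FreshPair

section Stage

/-- The bound on the elements present after `k` steps, each of which adjoins two elements. The
truncated `k - 1` is replaced by `1` for `k ≤ 1`, so that the first pair has room. -/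
def stageRadius (c k : ℕ) : ℕ := 8 * c * max (k - 1) 1 ^ 3

theorem stageRadius_mono (c : ℕ) : Monotone (stageRadius c) := fun k l hkl ↦ by
  unfold stageRadius
  gcongr

/-- The finite sets allowed after `k` steps of the construction: `2 * k` integers of size at most
`stageRadius c k`, with no integer represented more often than `f` prescribes. -/
structure IsStage (f : ℤ → ℕ∞) (c k : ℕ) (A : Finset ℤ) : Prop where
  card_eq : #A = 2 * k
  abs_le_radius : ∀ a ∈ A, |a| ≤ (stageRadius c k : ℤ)
  rep2_le : ∀ n, rep2 A n ≤ f n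

/-- A stage `A` together with the set `F` of at most `k` integers promised never to be adjoined. -/
structure IsGuardedStage (f : ℤ → ℕ∞) (c k : ℕ) (A F : Finset ℤ) : Prop
    extends IsStage f c k A where
  card_forbidden_le : #F ≤ k
  disjoint : Disjoint A F

variable {f : ℤ → ℕ∞} {Z A F : Finset ℤ} {c k : ℕ} {v : ℤ}

theorem isGuardedStage_empty : IsGuardedStage f c 0 ∅ ∅ where
  card_eq := rfl
  abs_le_radius := by simp
  rep2_le n := by simp [rep2]
  card_forbidden_le := le_rfl
  disjoint := disjoint_empty_left ∅

theorem exists_rep2_lt (hZ : ∀ n, f n = 0 → n ∈ Z) {L : ℕ} (hL : #A * #A + #Z ≤ 2 * L)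
    (hv : |v| ≤ L) :
    ∃ u : ℤ, |u| ≤ L ∧ rep2 A u < f u ∧ (rep2 A v < f v → u = v) := by
  by_cases h : rep2 A v < f v
  · exact ⟨v, hv, h, fun _ ↦ rfl⟩
  obtain ⟨u, huL, hu⟩ := exists_abs_le_notMem (S := (A + A) ∪ Z) (M := L) <| by
    grw [card_union_le, card_add_le]
    exact hL
  rw [mem_union, not_or] at hu
  have hzero : rep2 A u = 0 := rep2_eq_zero_iff.2 (by exact_mod_cast hu.1)
  exact ⟨u, huL, hzero ▸ pos_iff_ne_zero.2 fun h0 ↦ hu.2 (hZ u h0), fun h' ↦ absurd h' h⟩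

/- The left side is the number of values of `x` excluded in `exists_isFreshPair`, with `t` and `φ`
the sizes of `T` and `F`, plus twice the bound on `|u|`: this room keeps `y = u - x` in range. -/
theorem freshness_cost_le_stageRadius {D t φ : ℕ} (hc : 8 + (D + 1) / 2 ≤ c)
    (ht : t ≤ 2 * k * (2 * k) + D + 1) (hφ : φ ≤ k + 1) :
    2 * (t * (2 * k + 1) + φ) + (2 * k + 1) ^ 2 + 2 * (2 * k ^ 2 + (D + 1) / 2) ≤
      2 * stageRadius c (k + 1) := by
  have hD : D ≤ 2 * ((D + 1) / 2) := by omega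
  unfold stageRadius
  generalize (D + 1) / 2 = E at *
  rcases k with _ | k
  · norm_num
    omega
  · rw [show max (k + 1 + 1 - 1) 1 = k + 1 by omega]
    calc 2 * (t * (2 * (k + 1) + 1) + φ) + (2 * (k + 1) + 1) ^ 2 + 2 * (2 * (k + 1) ^ 2 + E)
        ≤ 2 * ((2 * (k + 1) * (2 * (k + 1)) + 2 * E + 1) * (2 * (k + 1) + 1) + (k + 1 + 1)) +
            (2 * (k + 1) + 1) ^ 2 + 2 * (2 * (k + 1) ^ 2 + E) := by
          gcongr
          omega
      _ ≤ 2 * (8 * (8 + E) * (k + 1) ^ 3) := by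
          ring_nf
          nlinarith [Nat.zero_le (E * k), Nat.zero_le (E * k ^ 2), Nat.zero_le (E * k ^ 3),
            Nat.zero_le (k ^ 2), Nat.zero_le (k ^ 3)]
      _ ≤ 2 * (8 * c * (k + 1) ^ 3) := by gcongr

theorem IsStage.exists_extension (hA : IsStage f c k A) (hZ : ∀ n, f n = 0 → n ∈ Z)
    (hc : 8 + (#Z + 1) / 2 ≤ c) (hv : |v| ≤ k) (hF : #F ≤ k + 1) (hAF : Disjoint A F) :
    ∃ A' : Finset ℤ, IsStage f c (k + 1) A' ∧ Disjoint A' F ∧ A ⊆ A' ∧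
      (rep2 A v < f v → rep2 A v + 1 ≤ rep2 A' v) := by
  set L := 2 * k ^ 2 + (#Z + 1) / 2
  have hkL : k ≤ L := by
    have := Nat.le_self_pow two_ne_zero k
    omega
  have hAA : #A * #A = 4 * k ^ 2 := by rw [hA.card_eq]; ring
  obtain ⟨u, huL, hu, huv⟩ := exists_rep2_lt (A := A) (L := L) hZ (by omega)
    (hv.trans (by exact_mod_cast hkL))
  let T := insert u ((A + A) ∪ Z)
  have hTcard : #T ≤ 2 * k * (2 * k) + #Z + 1 := by
    grw [card_insert_le, card_union_le, card_add_le, hA.card_eq]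
  have hbudget := freshness_cost_le_stageRadius hc hTcard hF
  obtain ⟨x, y, rfl, hxM, hxF, hyF, hfresh⟩ :=
    exists_isFreshPair A T F u (M := stageRadius c (k + 1) - L) (by rw [hA.card_eq]; omega)
  have huT : x + y ∈ (T : Set ℤ) := mem_insert_self _ _
  have hyA := hfresh.right_notMem huT
  have hxyA := hfresh.left_notMem_insert huT
  have hAT : (A + A : Set ℤ) ⊆ T := by
    exact_mod_cast subset_union_left.trans (subset_insert _ _)
  have hZT (n : ℤ) (hn : f n = 0) : n ∈ (T : Set ℤ) :=
    mem_insert_of_mem (mem_union_right _ (hZ n hn))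
  refine ⟨insert x (insert y A), ⟨?_, fun a ha ↦ ?_, fun n ↦ ?_⟩, ?_, ?_, fun hlt ↦ ?_⟩
  · rw [card_insert_of_notMem (by exact_mod_cast hxyA), card_insert_of_notMem hyA, hA.card_eq]
    ring
  · rw [Nat.cast_sub (by omega), abs_le] at hxM
    rw [abs_le] at huL ⊢
    rcases mem_insert.1 ha with rfl | ha
    · omega
    rcases mem_insert.1 ha with rfl | ha
    · omega
    · have hradius := stageRadius_mono c k.le_succ
      exact abs_le.1 ((hA.abs_le_radius a ha).trans (by exact_mod_cast hradius))
  · push_cast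
    exact hfresh.rep2_insert_insert_le huT hAT hZT hA.rep2_le hu n
  · simp only [disjoint_insert_left]
    exact ⟨hxF, hyF, hAF⟩
  · exact (subset_insert _ _).trans (subset_insert _ _)
  · rw [← huv hlt]
    push_cast
    simp [hfresh.rep2_insert_insert_of_mem huT huT]

theorem IsGuardedStage.exists_extension (h : IsGuardedStage f c k A F)
    (hZ : ∀ n, f n = 0 → n ∈ Z) (hc : 8 + (#Z + 1) / 2 ≤ c) (hv : |v| ≤ k) (B : Set ℤ) :
    ∃ A' F' : Finset ℤ, IsGuardedStage f c (k + 1) A' F' ∧ A ⊆ A' ∧ F ⊆ F' ∧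
      (rep2 A v < f v → rep2 A v + 1 ≤ rep2 A' v) ∧ ¬ (↑A' ⊆ B ∧ Disjoint ↑F' B) := by
  have hFcard := h.card_forbidden_le
  obtain ⟨A₁, h₁, hdisj₁, hsub₁, hgrow₁⟩ :=
    h.toIsStage.exists_extension hZ hc hv (by omega : #F ≤ k + 1) h.disjoint
  obtain ⟨x, hxA₁, hxA⟩ : ∃ x ∈ A₁, x ∉ A :=
    exists_mem_notMem_of_card_lt_card (by rw [h.card_eq, h₁.card_eq]; omega)
  by_cases hxB : x ∈ B
  · have hcard : #(insert x F) ≤ k + 1 := (card_insert_le _ _).trans (by omega)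
    obtain ⟨A₂, h₂, hdisj₂, hsub₂, hgrow₂⟩ :=
      h.toIsStage.exists_extension hZ hc hv hcard (disjoint_insert_right.2 ⟨hxA, h.disjoint⟩)
    refine ⟨A₂, insert x F, ⟨h₂, hcard, hdisj₂⟩, hsub₂, subset_insert x F, hgrow₂, fun hB ↦ ?_⟩
    exact Set.disjoint_left.1 hB.2 (mem_insert_self x F) hxB
  · exact ⟨A₁, F, ⟨h₁, by omega, hdisj₁⟩, hsub₁, Subset.rfl, hgrow₁, fun hB ↦ hxB (hB.1 hxA₁)⟩

end Stage

section Construction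

theorem exists_seq_of_forall_exists {α : Type*} {P : ℕ → α → Prop} {R : ℕ → α → α → Prop}
    {a : α} (h₀ : P 0 a) (h : ∀ k s, P k s → ∃ t, P (k + 1) t ∧ R k s t) :
    ∃ s : ℕ → α, ∀ k, P k (s k) ∧ R k (s k) (s (k + 1)) := by
  choose! next hnext using h
  let s : ℕ → α := fun k ↦ Nat.rec a next k
  have hs (k : ℕ) : P k (s k) := by
    induction k with
    | zero => exact h₀
    | succ k ih => exact (hnext k _ ih).1
  exact ⟨s, fun k ↦ ⟨hs k, (hnext k _ (hs k)).2⟩⟩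

theorem exists_seq_abs_le_frequently_eq :
    ∃ v : ℕ → ℤ, (∀ k, |v k| ≤ k) ∧ ∀ n, ∃ᶠ k in atTop, v k = n := by
  refine ⟨fun k ↦ (k.unpair.1.unpair.1 : ℤ) - k.unpair.1.unpair.2, fun k ↦ ?_, fun n ↦ ?_⟩
  · have h := k.unpair_left_le
    have h₁ := k.unpair.1.unpair_left_le
    have h₂ := k.unpair.1.unpair_right_le
    dsimp only
    rw [abs_le]
    omega
  · refine frequently_atTop.2 fun j ↦ ⟨Nat.pair (Nat.pair n.toNat (-n).toNat) j,
      Nat.right_le_pair _ _, ?_⟩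
    simp only [Nat.unpair_pair]
    omega

theorem exists_rep2_eq_forall_ne {f : ℤ → ℕ∞} {Z : Finset ℤ} {c : ℕ}
    (hZ : ∀ n, f n = 0 → n ∈ Z) (hc : 8 + (#Z + 1) / 2 ≤ c) (B : ℕ → Set ℤ) :
    ∃ A : Set ℤ, (∀ n, rep2 A n = f n) ∧ (∀ k, A ≠ B k) ∧
      ∀ k, ∃ S : Finset ℤ, IsStage f c k S ∧ ↑S ⊆ A := by
  obtain ⟨v, hvle, hv⟩ := exists_seq_abs_le_frequently_eq
  obtain ⟨s, hs⟩ := exists_seq_of_forall_exists (a := ((∅, ∅) : Finset ℤ × Finset ℤ))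
    (P := fun k s ↦ IsGuardedStage f c k s.1 s.2)
    (R := fun k s t ↦ s.1 ⊆ t.1 ∧ s.2 ⊆ t.2 ∧
      (rep2 s.1 (v k) < f (v k) → rep2 s.1 (v k) + 1 ≤ rep2 t.1 (v k)) ∧
      ¬ (↑t.1 ⊆ B k ∧ Disjoint ↑t.2 (B k)))
    isGuardedStage_empty
    fun k s h ↦ by simpa only [Prod.exists] using h.exists_extension hZ hc (hvle k) (B k)
  choose hstage hsub hforb hgrow hsep using hs
  have hmono : Monotone fun k ↦ ((s k).1 : Set ℤ) :=
    monotone_nat_of_le_succ fun k ↦ by exact_mod_cast hsub k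
  have hmonoForb : Monotone fun k ↦ (s k).2 := monotone_nat_of_le_succ hforb
  have hA (k : ℕ) : ((s k).1 : Set ℤ) ⊆ ⋃ k, ↑(s k).1 :=
    Set.subset_iUnion (fun k ↦ ((s k).1 : Set ℤ)) k
  have hforbidden (k : ℕ) : Disjoint ((s k).2 : Set ℤ) (⋃ k, ↑(s k).1) := by
    refine Set.disjoint_iUnion_right.2 fun i ↦ ?_
    have hdisj := disjoint_coe.2 (hstage (max i k)).disjoint.symm
    exact hdisj.mono (coe_subset.2 (hmonoForb (le_max_right i k))) (hmono (le_max_left i k))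
  exact ⟨⋃ k, ↑(s k).1, rep2_iUnion_eq hmono hv (fun k ↦ (hstage k).rep2_le) hgrow,
    fun k hk ↦ hsep k (hk ▸ ⟨hA (k + 1), hforbidden (k + 1)⟩),
    fun k ↦ ⟨(s k).1, (hstage k).toIsStage, hA k⟩⟩

end Construction

section Density

theorem stageRadius_natCeil_half_le (c : ℕ) {t : ℝ} (ht : 2 ≤ t) :
    (stageRadius c ⌈t / 2⌉₊ : ℝ) ≤ c * t ^ 3 := by
  have hceil : ((⌈t / 2⌉₊ - 1 : ℕ) : ℝ) ≤ t / 2 := by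
    have := Nat.ceil_lt_add_one (a := t / 2) (by positivity)
    rw [Nat.cast_pred (Nat.ceil_pos.2 (by positivity))]
    linarith
  have hmax : ((max (⌈t / 2⌉₊ - 1) 1 : ℕ) : ℝ) ≤ t / 2 := by
    rw [Nat.cast_max, Nat.cast_one]
    exact max_le hceil (by linarith)
  calc (stageRadius c ⌈t / 2⌉₊ : ℝ)
      = 8 * c * ((max (⌈t / 2⌉₊ - 1) 1 : ℕ) : ℝ) ^ 3 := by
        rw [stageRadius]
        push_cast
        rfl
    _ ≤ 8 * c * (t / 2) ^ 3 := by gcongr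
    _ = c * t ^ 3 := by ring

theorem finite_setOf_mem_and_abs_le (A : Set ℤ) (x : ℝ) :
    {a : ℤ | a ∈ A ∧ |(a : ℝ)| ≤ x}.Finite :=
  (Set.finite_Icc ⌈-x⌉ ⌊x⌋).subset fun _ ha ↦
    ⟨Int.ceil_le.2 (abs_le.1 ha.2).1, Int.le_floor.2 (abs_le.1 ha.2).2⟩

theorem rpow_le_ncard_of_forall_isStage {f : ℤ → ℕ∞} {A : Set ℤ} {c : ℕ} (hc : 0 < c)
    (hA : ∀ k, ∃ S : Finset ℤ, IsStage f c k S ∧ ↑S ⊆ A) {x : ℝ} (hx : 8 * (c : ℝ) ≤ x) :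
    (x / (c : ℝ)) ^ ((1 : ℝ) / 3) ≤ ({a : ℤ | a ∈ A ∧ |(a : ℝ)| ≤ x}.ncard : ℝ) := by
  have hc' : (0 : ℝ) < c := Nat.cast_pos.2 hc
  have hquot : 8 ≤ x / c := (le_div_iff₀ hc').2 hx
  set t : ℝ := (x / c) ^ ((1 : ℝ) / 3)
  have htcube : t ^ 3 = x / c := by
    rw [← Real.rpow_natCast, ← Real.rpow_mul (by positivity)]
    norm_num
  have ht : 2 ≤ t := le_of_pow_le_pow_left₀ three_ne_zero (by positivity) (by linarith)
  obtain ⟨S, hS, hSA⟩ := hA ⌈t / 2⌉₊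
  have hradius : (stageRadius c ⌈t / 2⌉₊ : ℝ) ≤ x := by
    simpa [htcube, mul_div_cancel₀, hc'.ne'] using stageRadius_natCeil_half_le c ht
  have hsub : (S : Set ℤ) ⊆ {a : ℤ | a ∈ A ∧ |(a : ℝ)| ≤ x} := fun a ha ↦
    ⟨hSA ha, le_trans (by exact_mod_cast hS.abs_le_radius a ha) hradius⟩
  calc t ≤ 2 * ⌈t / 2⌉₊ := by linarith [Nat.le_ceil (t / 2)]
    _ = #S := by rw [hS.card_eq, Nat.cast_mul, Nat.cast_two]
    _ ≤ _ := by
      rw [← Set.ncard_coe_finset]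
      exact_mod_cast Set.ncard_le_ncard hsub (finite_setOf_mem_and_abs_le A x)

end Density

theorem stmt3 (f : ℤ → ℕ∞) (hf : (f ⁻¹' {0}).Finite) (Δ : ℕ)
    (hΔ : (f ⁻¹' {0}).ncard = Δ) (c : ℕ) (hc : c = 8 + (Δ + 1) / 2) :
    ¬ Set.Countable {A : Set ℤ |
      (∀ n : ℤ, rep2 A n = f n) ∧
      ∀ x : ℝ, 8 * (c : ℝ) ≤ x →
        (x / (c : ℝ)) ^ ((1 : ℝ) / 3) ≤ ({a : ℤ | a ∈ A ∧ |(a : ℝ)| ≤ x}.ncard : ℝ)} := by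
  intro hcount
  obtain ⟨B, hB⟩ := Set.countable_iff_exists_subset_range.1 hcount
  have hcard : #hf.toFinset = Δ := by rw [← hΔ, Set.ncard_eq_toFinset_card _ hf]
  obtain ⟨A, hrep, hne, hstage⟩ := exists_rep2_eq_forall_ne (f := f) (Z := hf.toFinset) (c := c)
    (fun n hn ↦ by simpa using hn) (by omega) B
  obtain ⟨k, hk⟩ := hB ⟨hrep, fun x hx ↦ rpow_le_ncard_of_forall_isStage (by omega) hstage hx⟩
  exact hne k hk.symm
end

section
/- Let f : ℤ → ℕ ∪ {∞} be any function such that f⁻¹(0) is finite. Then there exist uncountably many sets A of integers such that the restricted representation function satisfies r̂_{A,2}(n) = f(n) for all integers n, and such that there are constants c_0 > 0 and x_0 with: the number of elements a ∈ A with |a| ≤ x is at least c_0 · x^{1/3} for all x ≥ x_0. -/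
/-- The restricted representation function of order 2: the number (in `ℕ∞`) of
ways to write `n = a₁ + a₂` with `a₁, a₂ ∈ A` and `a₁ < a₂`. -/
noncomputable def rep2res (A : Set ℤ) (n : ℤ) : ℕ∞ :=
  {p : ℤ × ℤ | p.1 ∈ A ∧ p.2 ∈ A ∧ p.1 < p.2 ∧ p.1 + p.2 = n}.encard

/-!
The set is the union of an increasing sequence of finite sets `A_k` with `r̂_{A_k} ≤ f`, built
together with increasing finite sets `F_k` of integers that are never to be used. Let `n_k` run
through every integer infinitely often. If `r̂_{A_k}(n_k) < f(n_k)`, adjoining a generic pair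
`c, n_k - c` creates one new representation of `n_k` and otherwise only sums that had no
representation, at which `f` is nonzero; hence the union has representation function `f`.

Since at most `O((k + 1)³)` integers `d` fail to satisfy `f ≠ 0` and `r̂ = 0` at all the sums
`d + a`, each stage can also adjoin some `d = O((k + 1)³)`, which forces the growth `x^{1/3}`.

Finally, given sets `B_0, B_1, …`, stage `k` takes one more admissible integer and adjoins it
to `A_k` if it is not in `B_k`, to `F_k` otherwise. The union then differs from every `B_k`.
-/

open Filter Function
open scoped Pointwise

lemma encard_iUnion_of_monotone {α ι : Type*} [Preorder ι] [IsDirectedOrder ι]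
    [(atTop : Filter ι).IsCountablyGenerated] {s : ι → Set α} (hs : Monotone s) :
    (⋃ i, s i).encard = ⨆ i, (s i).encard := by
  let : MeasurableSpace α := ⊤
  rw [← ENat.toENNReal_inj, ENat.toENNReal_iSup]
  simpa only [MeasureTheory.Measure.count_apply MeasurableSpace.measurableSet_top] using
    hs.measure_iUnion (μ := MeasureTheory.Measure.count)

lemma le_iSup_of_frequently_lt_succ {u : ℕ → ℕ∞} (hu : Monotone u) {b : ℕ∞}
    (h : ∃ᶠ k in atTop, u k < b → u k < u (k + 1)) : b ≤ ⨆ k, u k := by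
  by_contra! hlt
  obtain ⟨m, hm⟩ := ENat.exists_eq_iSup_of_lt_top (hlt.trans_le le_top)
  obtain ⟨k, hmk, hk⟩ := frequently_atTop.mp h m
  have hle : u (k + 1) ≤ u k := (le_iSup u (k + 1)).trans (hm.ge.trans (hu hmk))
  exact hle.not_gt (hk ((le_iSup u k).trans_lt hlt))

lemma exists_seq_frequently_eq (α : Type*) [Nonempty α] [Countable α] :
    ∃ t : ℕ → α, ∀ a, ∃ᶠ k in atTop, t k = a := by
  obtain ⟨g, hg⟩ := exists_surjective_nat α
  refine ⟨fun k ↦ g k.unpair.1, fun a ↦ frequently_atTop.mpr fun m ↦ ?_⟩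
  obtain ⟨j, rfl⟩ := hg a
  exact ⟨Nat.pair j m, Nat.right_le_pair j m, by simp only [Nat.unpair_pair]⟩

section Growth

lemma finite_setOf_mem_abs_le (S : Set ℤ) (x : ℝ) : {a : ℤ | a ∈ S ∧ |(a : ℝ)| ≤ x}.Finite := by
  refine (Set.finite_Icc (-⌊x⌋) ⌊x⌋).subset fun a ⟨_, ha⟩ ↦ ?_
  rw [Set.mem_Icc, ← abs_le, Int.le_floor]
  exact_mod_cast ha

lemma le_ncard_setOf_abs_le {S : Set ℤ} {e : ℕ → ℤ} (he : Injective e) (heS : ∀ k, e k ∈ S)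
    {k : ℕ} {x : ℝ} (hx : ∀ i < k, |(e i : ℝ)| ≤ x) :
    k ≤ {a : ℤ | a ∈ S ∧ |(a : ℝ)| ≤ x}.ncard := by
  calc k = (e '' Set.Iio k).ncard := by
        rw [Set.ncard_image_of_injective _ he, Set.ncard_eq_toFinset_card', Set.toFinset_Iio,
          Nat.card_Iio]
    _ ≤ _ := by
        refine Set.ncard_le_ncard ?_ (finite_setOf_mem_abs_le S x)
        rintro _ ⟨i, hi, rfl⟩
        exact ⟨heS i, hx i hi⟩

lemma exists_mul_rpow_le_ncard {S : Set ℤ} {e : ℕ → ℤ} (he : Injective e) (heS : ∀ k, e k ∈ S)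
    {K : ℝ} (hK : 0 < K) {d : ℕ} (hd : d ≠ 0) (heK : ∀ k : ℕ, |(e k : ℝ)| ≤ K * (k + 1) ^ d) :
    ∃ c₀ x₀ : ℝ, 0 < c₀ ∧ ∀ x : ℝ, x₀ ≤ x →
      c₀ * x ^ ((1 : ℝ) / d) ≤ ({a : ℤ | a ∈ S ∧ |(a : ℝ)| ≤ x}.ncard : ℝ) := by
  refine ⟨1 / (2 * K ^ ((1 : ℝ) / d)), K, by positivity, fun x hx ↦ ?_⟩
  have hx0 : 0 < x := hK.trans_le hx
  set y : ℝ := (x / K) ^ ((1 : ℝ) / d) with hy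
  have hy_one : 1 ≤ y := Real.one_le_rpow ((one_le_div hK).mpr hx) (by positivity)
  have hy_pow : y ^ d = x / K := by
    rw [hy, one_div, Real.rpow_inv_natCast_pow (by positivity) hd]
  have h_bound : ∀ i < ⌊y⌋₊, |(e i : ℝ)| ≤ x := fun i hi ↦ by
    have hiy : (i : ℝ) + 1 ≤ y := by exact_mod_cast (Nat.le_floor_iff (by positivity)).mp hi
    calc |(e i : ℝ)| ≤ K * (i + 1) ^ d := heK i
      _ ≤ K * y ^ d := by gcongr
      _ = x := by rw [hy_pow, mul_div_cancel₀ x hK.ne']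
  calc 1 / (2 * K ^ ((1 : ℝ) / d)) * x ^ ((1 : ℝ) / d) = y / 2 := by
        rw [hy, Real.div_rpow hx0.le hK.le]
        field_simp
    _ ≤ ⌊y⌋₊ := (Nat.div_two_lt_floor hy_one).le
    _ ≤ _ := by exact_mod_cast le_ncard_setOf_abs_le he heS h_bound

end Growth

section Rep2res

variable {A B : Set ℤ} {c n : ℤ} {f : ℤ → ℕ∞}

lemma rep2res_mono (h : A ⊆ B) (n : ℤ) : rep2res A n ≤ rep2res B n :=
  Set.encard_le_encard fun _ ⟨h₁, h₂, h₃⟩ ↦ ⟨h h₁, h h₂, h₃⟩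

lemma rep2res_eq_zero_of_notMem_add (h : n ∉ A + A) : rep2res A n = 0 :=
  Set.encard_eq_zero.mpr <| Set.eq_empty_of_forall_notMem fun p ⟨h₁, h₂, _, hn⟩ ↦
    h (Set.mem_add.mpr ⟨p.1, h₁, p.2, h₂, hn⟩)

lemma rep2res_iUnion_of_monotone {ι : Type*} [Preorder ι] [IsDirectedOrder ι]
    [(atTop : Filter ι).IsCountablyGenerated] {S : ι → Set ℤ} (hS : Monotone S) (n : ℤ) :
    rep2res (⋃ k, S k) n = ⨆ k, rep2res (S k) n := by
  have hpairs : Monotone fun k ↦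
      {p : ℤ × ℤ | p.1 ∈ S k ∧ p.2 ∈ S k ∧ p.1 < p.2 ∧ p.1 + p.2 = n} :=
    fun _ _ hij _ ⟨h₁, h₂, h₃⟩ ↦ ⟨hS hij h₁, hS hij h₂, h₃⟩
  unfold rep2res
  rw [← encard_iUnion_of_monotone hpairs]
  congr 1
  ext p
  simp only [Set.mem_iUnion, Set.mem_ofPred_eq]
  constructor
  · rintro ⟨⟨i, hi⟩, ⟨j, hj⟩, h⟩
    obtain ⟨k, hik, hjk⟩ := exists_ge_ge i j
    exact ⟨k, hS hik hi, hS hjk hj, h⟩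
  · rintro ⟨k, h₁, h₂, h⟩
    exact ⟨⟨k, h₁⟩, ⟨k, h₂⟩, h⟩

lemma rep2res_insert_of_sub_notMem (h : n - c ∉ A) : rep2res (insert c A) n = rep2res A n := by
  refine congrArg Set.encard (Set.ext fun ⟨x, y⟩ ↦ ?_)
  simp only [Set.mem_insert_iff, Set.mem_ofPred_eq]
  grind

lemma rep2res_insert_of_sub_mem (hc : c ∉ A) (h : n - c ∈ A) :
    rep2res (insert c A) n = rep2res A n + 1 := by
  have hne : n - c ≠ c := fun h' ↦ hc (h' ▸ h)
  unfold rep2res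
  rw [← Set.encard_insert_of_notMem (a := (min c (n - c), max c (n - c)))]
  · congr 1
    ext ⟨x, y⟩
    simp only [Set.mem_insert_iff, Set.mem_ofPred_eq, Prod.mk.injEq]
    grind
  · simp only [Set.mem_ofPred_eq]
    grind

lemma rep2res_insert_le (hA : rep2res A ≤ f) (hc : ∀ a ∈ A, rep2res A (c + a) < f (c + a)) :
    rep2res (insert c A) ≤ f := by
  intro n
  by_cases hcA : c ∈ A
  · rw [Set.insert_eq_of_mem hcA]
    exact hA n
  by_cases hn : n - c ∈ A
  · rw [rep2res_insert_of_sub_mem hcA hn]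
    exact Order.add_one_le_of_lt (by simpa only [add_sub_cancel] using hc _ hn)
  · rw [rep2res_insert_of_sub_notMem hn]
    exact hA n

lemma rep2res_lt_of_notMem (hn : n ∉ f ⁻¹' {0} ∪ (A + A)) : rep2res A n < f n := by
  rw [Set.mem_union, not_or] at hn
  rw [rep2res_eq_zero_of_notMem_add hn.2]
  exact pos_iff_ne_zero.mpr hn.1

lemma eventually_cofinite_rep2res_lt (hf : (f ⁻¹' {0}).Finite) (hA : A.Finite) :
    ∀ᶠ n in cofinite, rep2res A n < f n :=
  (hf.union (hA.add hA)).eventually_cofinite_notMem.mono fun _ ↦ rep2res_lt_of_notMem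

end Rep2res

/-- A finite approximation to a set of integers with representation function `f`: finitely many
integers decided to be in the set and finitely many decided to be outside of it, such that no
integer has too many representations so far. -/
structure RepApprox (f : ℤ → ℕ∞) where
  included : Finset ℤ
  excluded : Finset ℤ
  disjoint : Disjoint included excluded
  rep2res_le : rep2res (included : Set ℤ) ≤ f

namespace RepApprox

variable {f : ℤ → ℕ∞}

/-- Approximations are ordered by the amount of information: both components increase. -/
instance : Preorder (RepApprox f) := Preorder.lift fun p ↦ (p.included, p.excluded)

/-- The approximation that decides nothing. -/
instance : Inhabited (RepApprox f) where
  default := ⟨∅, ∅, Finset.disjoint_empty_left ∅, fun n ↦ by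
    rw [rep2res_eq_zero_of_notMem_add (by simp)]
    exact zero_le⟩

/-- The number of integers decided by an approximation. -/
def size (p : RepApprox f) : ℕ := p.included.card + p.excluded.card

/-- A set of integers agrees with an approximation if it respects all of its decisions. -/
def Agrees (p : RepApprox f) (S : Set ℤ) : Prop :=
  (p.included : Set ℤ) ⊆ S ∧ Disjoint (p.excluded : Set ℤ) S

/-- An integer is adjoinable to an approximation if it is undecided and including it keeps all
representation counts at most `f`. -/
structure Adjoinable (p : RepApprox f) (c : ℤ) : Prop where
  notMem_included : c ∉ p.included
  notMem_excluded : c ∉ p.excluded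
  rep2res_lt : ∀ a ∈ p.included, rep2res p.included (c + a) < f (c + a)

/-- The approximation obtained by deciding that an adjoinable integer is in the set. -/
def adjoin (p : RepApprox f) {c : ℤ} (hc : p.Adjoinable c) : RepApprox f where
  included := insert c p.included
  excluded := p.excluded
  disjoint := Finset.disjoint_insert_left.mpr ⟨hc.notMem_excluded, p.disjoint⟩
  rep2res_le := by
    rw [Finset.coe_insert]
    exact rep2res_insert_le p.rep2res_le hc.rep2res_lt

/-- The approximation obtained by deciding that an integer is outside of the set. -/
def exclude (p : RepApprox f) {c : ℤ} (hc : c ∉ p.included) : RepApprox f where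
  included := p.included
  excluded := insert c p.excluded
  disjoint := Finset.disjoint_insert_right.mpr ⟨hc, p.disjoint⟩
  rep2res_le := p.rep2res_le

variable (p : RepApprox f) {c : ℤ}

lemma le_adjoin (hc : p.Adjoinable c) : p ≤ p.adjoin hc :=
  ⟨Finset.subset_insert c p.included, subset_rfl⟩

lemma le_exclude (hc : c ∉ p.included) : p ≤ p.exclude hc :=
  ⟨subset_rfl, Finset.subset_insert c p.excluded⟩

lemma size_adjoin_le (hc : p.Adjoinable c) : (p.adjoin hc).size ≤ p.size + 1 := by
  have := Finset.card_insert_le c p.included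
  simp only [size, adjoin]
  lia

lemma size_exclude_le (hc : c ∉ p.included) : (p.exclude hc).size ≤ p.size + 1 := by
  have := Finset.card_insert_le c p.excluded
  simp only [size, exclude]
  lia

lemma eventually_cofinite_adjoinable (hf : (f ⁻¹' {0}).Finite) :
    ∀ᶠ c in cofinite, p.Adjoinable c := by
  have hlt : ∀ᶠ c in cofinite, ∀ a ∈ p.included, rep2res p.included (c + a) < f (c + a) :=
    (eventually_all_finset _).mpr fun a _ ↦ (add_left_injective a).tendsto_cofinite.eventually
      (eventually_cofinite_rep2res_lt hf p.included.finite_toSet)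
  filter_upwards [p.included.eventually_cofinite_notMem, p.excluded.eventually_cofinite_notMem,
    hlt] with c h₁ h₂ h₃ using ⟨h₁, h₂, h₃⟩

lemma exists_adjoinable_mem_Icc (hf : (f ⁻¹' {0}).Finite) :
    ∃ d ∈ Finset.Icc (1 : ℤ) (((f ⁻¹' {0}).ncard + 1) * (p.size + 1) ^ 3 : ℕ), p.Adjoinable d := by
  set A := p.included
  set z := (f ⁻¹' {0}).ncard with hz
  let bad : Finset ℤ := A ∪ p.excluded ∪ ((hf.toFinset ∪ (A + A)) - A)
  have hAp : A.card ≤ p.size := Nat.le_add_right _ _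
  have h_bad : bad.card < (z + 1) * (p.size + 1) ^ 3 := by
    calc bad.card ≤ p.size + (z + A.card * A.card) * A.card := by
          refine (Finset.card_union_le _ _).trans (add_le_add (Finset.card_union_le _ _) ?_)
          refine Finset.card_sub_le.trans (Nat.mul_le_mul_right _ ?_)
          rw [hz, Set.ncard_eq_toFinset_card _ hf]
          exact (Finset.card_union_le _ _).trans (add_le_add_right Finset.card_add_le _)
      _ ≤ p.size + (z + p.size * p.size) * p.size := by gcongr
      _ < (z + 1) * (p.size + 1) ^ 3 := by
          ring_nf
          lia
  have h_Icc : bad.card < (Finset.Icc (1 : ℤ) ((z + 1) * (p.size + 1) ^ 3 : ℕ)).card := by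
    simpa only [Int.card_Icc, add_sub_cancel_right, Int.toNat_natCast] using h_bad
  obtain ⟨d, hd, hd_bad⟩ := Finset.exists_mem_notMem_of_card_lt_card h_Icc
  simp only [bad, Finset.mem_union, not_or] at hd_bad
  obtain ⟨⟨hdA, hdF⟩, hd_sub⟩ := hd_bad
  refine ⟨d, hd, hdA, hdF, fun a ha ↦ rep2res_lt_of_notMem fun h ↦ hd_sub ?_⟩
  refine Finset.mem_sub.mpr ⟨d + a, ?_, a, ha, add_sub_cancel_right d a⟩
  simpa only [← Finset.mem_coe, Finset.coe_union, Finset.coe_add, hf.coe_toFinset] using h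

variable {p} in
lemma Adjoinable.adjoin_sub {t : ℤ} (hc : p.Adjoinable c) (htc : p.Adjoinable (t - c))
    (hne : t - c ≠ c) (hsub : ∀ a ∈ p.included, t - c + a - c ∉ p.included)
    (ht : rep2res p.included t < f t) : (p.adjoin hc).Adjoinable (t - c) where
  notMem_included := Finset.mem_insert.not.mpr (not_or.mpr ⟨hne, htc.notMem_included⟩)
  notMem_excluded := htc.notMem_excluded
  rep2res_lt a ha := by
    simp only [adjoin, Finset.coe_insert]
    rcases Finset.mem_insert.mp ha with rfl | ha
    · rw [sub_add_cancel, rep2res_insert_of_sub_notMem htc.notMem_included]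
      exact ht
    · rw [rep2res_insert_of_sub_notMem (hsub a ha)]
      exact htc.rep2res_lt a ha

lemma rep2res_lt_adjoin_sub {t : ℤ} (hc : c ∈ p.included) (htc : p.Adjoinable (t - c))
    (ht : rep2res p.included t ≠ ⊤) :
    rep2res p.included t < rep2res (p.adjoin htc).included t := by
  rw [adjoin, Finset.coe_insert,
    rep2res_insert_of_sub_mem htc.notMem_included (by rwa [sub_sub_cancel])]
  exact (ENat.lt_add_one_iff ht).mpr le_rfl

lemma exists_ge_rep2res_lt (hf : (f ⁻¹' {0}).Finite) (t : ℤ) :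
    ∃ q, p ≤ q ∧ q.size ≤ p.size + 2 ∧
      (rep2res p.included t < f t → rep2res p.included t < rep2res q.included t) := by
  by_cases ht : rep2res p.included t < f t
  swap
  · exact ⟨p, le_rfl, Nat.le_add_right _ _, fun h ↦ absurd h ht⟩
  have h_adj := p.eventually_cofinite_adjoinable hf
  have h_adj_sub : ∀ᶠ c in cofinite, p.Adjoinable (t - c) :=
    (sub_right_injective (b := t)).tendsto_cofinite.eventually h_adj
  have h_ne : ∀ᶠ c in cofinite, t - c ≠ c := by
    refine ((Set.finite_singleton (t / 2)).eventually_cofinite_notMem).mono fun c hc h ↦ hc ?_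
    rw [Set.mem_singleton_iff]
    lia
  have h_sub : ∀ᶠ c in cofinite, ∀ a ∈ p.included, t - c + a - c ∉ p.included :=
    (eventually_all_finset _).mpr fun a _ ↦
      have h_inj : Injective fun c : ℤ ↦ t - c + a - c := fun _ _ h ↦ by
        dsimp only at h
        lia
      h_inj.tendsto_cofinite.eventually p.included.eventually_cofinite_notMem
  obtain ⟨c, hc, htc, hne, hsub⟩ := (h_adj.and (h_adj_sub.and (h_ne.and h_sub))).exists
  have htc' := hc.adjoin_sub htc hne hsub ht
  have hct : rep2res (p.adjoin hc).included t = rep2res p.included t := by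
    rw [adjoin, Finset.coe_insert, rep2res_insert_of_sub_notMem htc.notMem_included]
  refine ⟨(p.adjoin hc).adjoin htc', (p.le_adjoin hc).trans (le_adjoin _ htc'), ?_, fun _ ↦ ?_⟩
  · exact (size_adjoin_le _ htc').trans (Nat.add_le_add_right (p.size_adjoin_le hc) 1)
  · rw [← hct] at ht ⊢
    exact rep2res_lt_adjoin_sub _ (Finset.mem_insert_self c _) htc' ht.ne_top

lemma exists_ge_mem_natAbs_le (hf : (f ⁻¹' {0}).Finite) :
    ∃ q, p ≤ q ∧ q.size ≤ p.size + 1 ∧ ∃ d ∈ q.included, d ∉ p.included ∧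
      d.natAbs ≤ ((f ⁻¹' {0}).ncard + 1) * (p.size + 1) ^ 3 := by
  obtain ⟨d, hd, hdp⟩ := p.exists_adjoinable_mem_Icc hf
  refine ⟨p.adjoin hdp, p.le_adjoin hdp, p.size_adjoin_le hdp, d,
    Finset.mem_insert_self d p.included, hdp.notMem_included, ?_⟩
  rw [Finset.mem_Icc] at hd
  lia

lemma exists_ge_not_agrees (hf : (f ⁻¹' {0}).Finite) (B : Set ℤ) :
    ∃ q, p ≤ q ∧ q.size ≤ p.size + 1 ∧ ¬ q.Agrees B := by
  obtain ⟨c, hc⟩ := (p.eventually_cofinite_adjoinable hf).exists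
  by_cases hcB : c ∈ B
  · refine ⟨p.exclude hc.notMem_included, p.le_exclude _, p.size_exclude_le _, fun h ↦ ?_⟩
    exact Set.disjoint_left.mp h.2 (Finset.mem_insert_self c p.excluded) hcB
  · refine ⟨p.adjoin hc, p.le_adjoin hc, p.size_adjoin_le hc, fun h ↦ ?_⟩
    exact hcB (h.1 (Finset.mem_insert_self c p.included))

lemma rep2res_included_mono {p q : RepApprox f} (h : p ≤ q) (n : ℤ) :
    rep2res p.included n ≤ rep2res q.included n :=
  rep2res_mono (Finset.coe_subset.mpr h.1) n

lemma exists_step (hf : (f ⁻¹' {0}).Finite) (t : ℤ) (B : Set ℤ) :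
    ∃ q d, p ≤ q ∧ q.size ≤ p.size + 4 ∧
      (rep2res p.included t < f t → rep2res p.included t < rep2res q.included t) ∧
      d ∈ q.included ∧ d ∉ p.included ∧
      d.natAbs ≤ ((f ⁻¹' {0}).ncard + 1) * (p.size + 3) ^ 3 ∧ ¬ q.Agrees B := by
  obtain ⟨p₁, hp₁, hsize₁, ht⟩ := p.exists_ge_rep2res_lt hf t
  obtain ⟨p₂, hp₂, hsize₂, d, hd, hdp, hd_le⟩ := p₁.exists_ge_mem_natAbs_le hf
  obtain ⟨p₃, hp₃, hsize₃, hB⟩ := p₂.exists_ge_not_agrees hf B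
  refine ⟨p₃, d, hp₁.trans (hp₂.trans hp₃), by lia, fun h ↦ ?_, hp₃.1 hd, ?_, ?_, hB⟩
  · exact (ht h).trans_le (rep2res_included_mono (hp₂.trans hp₃) t)
  · exact fun h ↦ hdp (hp₁.1 h)
  · refine hd_le.trans (Nat.mul_le_mul_left _ (Nat.pow_le_pow_left ?_ 3))
    lia

lemma exists_monotone_seq (hf : (f ⁻¹' {0}).Finite) (t : ℕ → ℤ) (B : ℕ → Set ℤ) :
    ∃ (s : ℕ → RepApprox f) (e : ℕ → ℤ), Monotone s ∧ Injective e ∧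
      (∀ k, rep2res (s k).included (t k) < f (t k) →
        rep2res (s k).included (t k) < rep2res (s (k + 1)).included (t k)) ∧
      (∀ k, e k ∈ (s (k + 1)).included) ∧
      (∀ k, (e k).natAbs ≤ 64 * ((f ⁻¹' {0}).ncard + 1) * (k + 1) ^ 3) ∧
      ∀ k, ¬ (s (k + 1)).Agrees (B k) := by
  choose next d h_le h_size h_rep hd_mem hd_notMem hd_le h_agrees using
    fun (p : RepApprox f) (t : ℤ) (B : Set ℤ) ↦ p.exists_step hf t B
  let s : ℕ → RepApprox f := Nat.rec default fun k p ↦ next p (t k) (B k)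
  have hs : Monotone s := monotone_nat_of_le_succ fun k ↦ h_le (s k) (t k) (B k)
  have hs_size (k : ℕ) : (s k).size ≤ 4 * k := by
    induction k with
    | zero => exact le_rfl
    | succ k ih => exact (h_size (s k) (t k) (B k)).trans (Nat.add_le_add_right ih 4)
  refine ⟨s, fun k ↦ d (s k) (t k) (B k), hs, ?_, fun k ↦ h_rep (s k) (t k) (B k),
    fun k ↦ hd_mem (s k) (t k) (B k), fun k ↦ ?_, fun k ↦ h_agrees (s k) (t k) (B k)⟩
  · refine Injective.of_lt_imp_ne fun i j hij h ↦ hd_notMem (s j) (t j) (B j) ?_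
    rw [← h]
    exact (hs hij).1 (hd_mem (s i) (t i) (B i))
  · calc (d (s k) (t k) (B k)).natAbs
        ≤ ((f ⁻¹' {0}).ncard + 1) * ((s k).size + 3) ^ 3 := hd_le (s k) (t k) (B k)
      _ ≤ ((f ⁻¹' {0}).ncard + 1) * (4 * (k + 1)) ^ 3 := by
          have := hs_size k
          gcongr
          lia
      _ = 64 * ((f ⁻¹' {0}).ncard + 1) * (k + 1) ^ 3 := by ring

/-- The set of all integers that some member of a sequence of approximations includes; for an
increasing sequence, this is the set being approximated. -/
def limit (s : ℕ → RepApprox f) : Set ℤ := ⋃ k, ((s k).included : Set ℤ)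

lemma included_subset_limit (s : ℕ → RepApprox f) (k : ℕ) : ((s k).included : Set ℤ) ⊆ limit s :=
  Set.subset_iUnion (fun k ↦ ((s k).included : Set ℤ)) k

variable {s : ℕ → RepApprox f}

lemma agrees_limit (hs : Monotone s) (k : ℕ) : (s k).Agrees (limit s) := by
  refine ⟨included_subset_limit s k, Set.disjoint_iUnion_right.mpr fun j ↦ ?_⟩
  refine Disjoint.mono (hs (le_max_left k j)).2 (hs (le_max_right k j)).1 ?_
  exact Finset.disjoint_coe.mpr (s (max k j)).disjoint.symm

lemma rep2res_limit (hs : Monotone s) {n : ℤ} (h : ∃ᶠ k in atTop, rep2res (s k).included n < f n →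
    rep2res (s k).included n < rep2res (s (k + 1)).included n) :
    rep2res (limit s) n = f n := by
  rw [limit, rep2res_iUnion_of_monotone fun i j hij ↦ Finset.coe_subset.mpr (hs hij).1]
  exact le_antisymm (iSup_le fun k ↦ (s k).rep2res_le n)
    (le_iSup_of_frequently_lt_succ (fun i j hij ↦ rep2res_included_mono (hs hij) n) h)

end RepApprox

open RepApprox in
lemma exists_rep2res_eq_forall_ne (f : ℤ → ℕ∞) (hf : (f ⁻¹' {0}).Finite) (B : ℕ → Set ℤ) :
    ∃ A : Set ℤ, ((∀ n : ℤ, rep2res A n = f n) ∧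
      ∃ c₀ x₀ : ℝ, 0 < c₀ ∧ ∀ x : ℝ, x₀ ≤ x →
        c₀ * x ^ ((1 : ℝ) / 3) ≤ ({a : ℤ | a ∈ A ∧ |(a : ℝ)| ≤ x}.ncard : ℝ)) ∧
      ∀ k, A ≠ B k := by
  obtain ⟨t, ht⟩ := exists_seq_frequently_eq ℤ
  obtain ⟨s, e, hs, he, h_rep, hes, he_le, h_agrees⟩ := exists_monotone_seq hf t B
  refine ⟨limit s, ⟨fun n ↦ ?_, ?_⟩, fun k hk ↦ ?_⟩
  · exact rep2res_limit hs ((ht n).mono fun k hk ↦ hk ▸ h_rep k)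
  · have hK : (0 : ℝ) < (64 * ((f ⁻¹' {0}).ncard + 1) : ℕ) := by positivity
    refine mod_cast exists_mul_rpow_le_ncard he (fun k ↦ included_subset_limit s _ (hes k)) hK
      three_ne_zero fun k ↦ ?_
    rw [← Int.cast_abs, Int.abs_eq_natAbs]
    exact_mod_cast he_le k
  · exact h_agrees k (hk ▸ agrees_limit hs (k + 1))

theorem stmt4 (f : ℤ → ℕ∞) (hf : (f ⁻¹' {0}).Finite) :
    ¬ Set.Countable {A : Set ℤ |
      (∀ n : ℤ, rep2res A n = f n) ∧
      ∃ c₀ x₀ : ℝ, 0 < c₀ ∧ ∀ x : ℝ, x₀ ≤ x →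
        c₀ * x ^ ((1 : ℝ) / 3) ≤ ({a : ℤ | a ∈ A ∧ |(a : ℝ)| ≤ x}.ncard : ℝ)} := by
  intro h_countable
  obtain ⟨B, hB⟩ := Set.countable_iff_exists_subset_range.mp h_countable
  obtain ⟨A, hA, hAB⟩ := exists_rep2res_eq_forall_ne f hf B
  obtain ⟨k, hk⟩ := hB hA
  exact hAB k hk.symm
end
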